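/- Let n ≥ 2 be an integer and let P be a product of n nontrivial finite trees with componentwise ordering. Then (κ^{+(n-1)},<κ)⤳P holds for every infinite cardinal κ, while (λ^{+(n-2)},<λ)⤳P fails for every infinite cardinal λ; that is, the Kuratowski index of P is exactly n. -/

import Mathlib

/-!
The positive half is a Kuratowski-type free set argument. Fix `F` on a set `A` of size `κ⁺ⁿ⁻¹`.
Coding `n`-tuples of elements of `A` by elements of `A`, one looks for `f` of the form
`f w = code (a 0 (w 0), …, a (n-1) (w (n-1)))`, where each tree is numbered along a linear
extension. If `x, w ≤ y` and `w ≰ x`, then at some coordinate `i` the elements `w i` and `x i`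
both lie in the chain below `y i`, so `x i < w i`; hence it suffices that `a i t` avoids a
suitable monotone set map `G` (of values `< κ` on finite sets) applied to all `a j s` with
`j ≠ i` or `s < t`. Such sequences are built by induction on `n` (`exists_free_sequences`):
choose `X` of size `κ⁺ⁿ⁻¹` inside a set of size `κ⁺ⁿ`, pick the terms of the last sequence one by
one outside the values of `G` on finite sets made of `X` and the earlier terms, and
apply the induction hypothesis inside `X`.

The negative half is the converse of Kuratowski's theorem (`exists_no_free_set`): on a set of size
`≤ λ⁺ᵏ` there is a map from finite sets to sets of size `< λ` such that every set of `k + 2`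
elements has a member lying in the image of the set of the others. With `k = n - 2` this is applied
to the images of the `n` atoms of a copy of `2ⁿ` inside the product, the sets of the others lying
below the coatoms.
-/

universe u v w

open Cardinal

/-- The relation `(κ,<λ)⤳P`: for every map `F` from the powerset of (a set of size) `κ`
to the subsets of size `< λ`, there is an injective `f : P → κ` such that
`F(f''(P↓x)) ∩ f''(P↓y) ⊆ f''(P↓x)` whenever `x ≤ y` in `P`. -/
def Leadsto (κ lam : Cardinal.{u}) (P : Type v) [PartialOrder P] : Prop :=
  ∀ A : Type u, #A = κ →
    ∀ F : Set A → Set A, (∀ X : Set A, #↥(F X) < lam) →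
      ∃ f : P → A, Function.Injective f ∧
        ∀ x y : P, x ≤ y →
          F (f '' Set.Iic x) ∩ f '' Set.Iic y ⊆ f '' Set.Iic x

/-- The `n`-th cardinal successor `κ⁺ⁿ`. -/
noncomputable def succN (κ : Cardinal.{u}) (n : ℕ) : Cardinal.{u} := Order.succ^[n] κ

/-! ### Cardinal arithmetic -/

lemma succN_succ (κ : Cardinal.{u}) (n : ℕ) : succN κ (n + 1) = Order.succ (succN κ n) := by
  simp only [succN, Function.iterate_succ_apply']

lemma le_succN (κ : Cardinal.{u}) (n : ℕ) : κ ≤ succN κ n := by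
  induction n with
  | zero => exact le_rfl
  | succ n ih => rw [succN_succ]; exact ih.trans (Order.le_succ _)

/-- No regularity of `κ` is needed since the union is finite. -/
lemma mk_iUnion_lt_of_finite {A : Type u} {ι : Type w} [Finite ι] {κ : Cardinal.{u}} (hκ : ℵ₀ ≤ κ)
    (s : ι → Set A) (hs : ∀ i, #(s i) < κ) : #↥(⋃ i, s i) < κ := by
  have key : ∀ t : Set ι, t.Finite → #↥(⋃ i ∈ t, s i) < κ := by
    intro t ht
    induction t, ht using Set.Finite.induction_on with
    | empty => simpa using aleph0_pos.trans_le hκ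
    | insert _ _ ih =>
      rw [Set.biUnion_insert]
      exact (mk_union_le _ _).trans_lt (add_lt_of_lt hκ (hs _) ih)
  simpa using key Set.univ Set.finite_univ

/-! ### Free sequences in large sets -/

/-- Recursive choice of a sequence each of whose terms avoids a small set depending on the
earlier terms. -/
lemma exists_avoiding_sequence {A : Type u} (B : Set A) (D : Set A → Set A)
    (hD : ∀ U : Set A, U.Finite → #(D U) < #B) :
    ∃ b : ℕ → A, (∀ t, b t ∈ B) ∧ ∀ t, b t ∉ D {x | ∃ s < t, x = b s} := by
  have h : ∀ U : Set A, ∃ x, U.Finite → x ∈ B ∧ x ∉ D U := by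
    intro U
    by_cases hU : U.Finite
    · have : ¬ B ⊆ D U := fun hsub => (mk_le_mk_of_subset hsub).not_gt (hD U hU)
      obtain ⟨x, hx⟩ := Set.not_subset.mp this
      exact ⟨x, fun _ => hx⟩
    · have hB : B.Nonempty := by
        rw [Set.nonempty_iff_ne_empty]
        rintro rfl
        simpa using hD ∅ Set.finite_empty
      exact ⟨hB.some, fun h => absurd h hU⟩
  choose c hc using h
  let b : ℕ → A := fun t =>
    Nat.strongRec (motive := fun _ => A) (fun t ih => c {x | ∃ s, ∃ h : s < t, x = ih s h}) t
  have hb : ∀ t, b t = c {x | ∃ s < t, x = b s} := by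
    intro t
    change Nat.strongRec (motive := fun _ => A) _ t = _
    rw [Nat.strongRec]
    simp only [exists_prop]
    rfl
  have hfin : ∀ t, {x | ∃ s < t, x = b s}.Finite := by
    intro t
    refine ((Set.finite_Iio t).image b).subset ?_
    rintro x ⟨s, hs, rfl⟩
    exact ⟨s, hs, rfl⟩
  refine ⟨b, fun t => ?_, fun t => ?_⟩
  · rw [hb t]; exact (hc _ (hfin t)).1
  · have := (hc _ (hfin t)).2
    rwa [← hb t] at this

/-- In a set of size at least `κ⁺ⁿ` there are `n + 1` sequences of length `m` such that every term
is free, relative to `G`, from all terms of the other sequences together with the earlier terms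
of its own sequence. -/
lemma exists_free_sequences {A : Type u} {κ : Cardinal.{u}} (hκ : ℵ₀ ≤ κ) (m : ℕ) (n : ℕ) :
    ∀ (B : Set A), succN κ n ≤ #B → ∀ G : Set A → Set A, Monotone G →
      (∀ U : Set A, U.Finite → #(G U) < κ) →
      ∃ a : ℕ → ℕ → A, (∀ i ≤ n, ∀ t < m, a i t ∈ B) ∧
        ∀ i ≤ n, ∀ t < m,
          a i t ∉ G {x | ∃ j ≤ n, ∃ s < m, (j ≠ i ∨ s < t) ∧ x = a j s} := by
  induction n with
  | zero =>
    intro B hB G hG hGκ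
    obtain ⟨b, hb, hbG⟩ := exists_avoiding_sequence B G (fun U hU => (hGκ U hU).trans_le hB)
    refine ⟨fun _ => b, fun _ _ t _ => hb t, fun i hi t _ hmem => hbG t (hG ?_ hmem)⟩
    rintro x ⟨j, hj, s, _, h, rfl⟩
    exact ⟨s, h.resolve_left (by omega), rfl⟩
  | succ n ih =>
    intro B hB G hG hGκ
    rw [succN_succ] at hB
    have hμ : ℵ₀ ≤ succN κ n := hκ.trans (le_succN κ n)
    obtain ⟨X, hXB, hX⟩ := le_mk_iff_exists_subset.mp ((Order.le_succ _).trans hB)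
    have : Infinite X := by rw [infinite_iff, hX]; exact hμ
    obtain ⟨b, hb, hbD⟩ := exists_avoiding_sequence B
      (fun U => ⋃ Y : Finset X, G (Subtype.val '' (Y : Set X) ∪ U)) (by
        intro U hU
        refine lt_of_le_of_lt ?_ (Order.succ_le_iff.mp hB)
        refine (mk_iUnion_le _).trans ?_
        rw [mk_finset_of_infinite, hX]
        refine (mul_le_mul_right (ciSup_le' (a := succN κ n) fun Y => ?_) _).trans
          (mul_eq_self hμ).le
        exact (hGκ _ ((Y.finite_toSet.image _).union hU)).le.trans (le_succN κ n))
    have hlast : {x | ∃ s < m, x = b s}.Finite := by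
      refine ((Set.finite_Iio m).image b).subset ?_
      rintro x ⟨s, hs, rfl⟩
      exact ⟨s, hs, rfl⟩
    obtain ⟨a, ha, haG⟩ := ih X hX.ge (fun U => G (U ∪ {x | ∃ s < m, x = b s}))
      (fun U V h => hG (Set.union_subset_union_left _ h)) (fun U hU => hGκ _ (hU.union hlast))
    refine ⟨fun i => if i ≤ n then a i else b, ?_, ?_⟩
    · intro i _ t ht
      by_cases h : i ≤ n
      · simpa [h] using hXB (ha i h t ht)
      · simpa [h] using hb t
    · intro i hi t ht hmem
      by_cases h : i ≤ n
      · simp only [h, if_true] at hmem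
        refine haG i h t ht (hG ?_ hmem)
        rintro x ⟨j, _, s, hs, hjs, rfl⟩
        by_cases hj : j ≤ n
        · simp only [hj, if_true]
          exact Or.inl ⟨j, hj, s, hs, hjs, rfl⟩
        · simp only [hj, if_false]
          exact Or.inr ⟨s, hs, rfl⟩
      · simp only [h, if_false] at hmem
        apply hbD t
        have hYfin : {x : X | ∃ j ≤ n, ∃ s < m, x.1 = a j s}.Finite := by
          refine Set.Finite.of_finite_image (f := Subtype.val) ?_ Subtype.val_injective.injOn
          refine (((Set.finite_Iic n).prod (Set.finite_Iio m)).image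
            (fun p => a p.1 p.2)).subset ?_
          rintro _ ⟨x, ⟨j, hj, s, hs, e⟩, rfl⟩
          exact ⟨(j, s), ⟨hj, hs⟩, e.symm⟩
        refine Set.mem_iUnion.mpr ⟨hYfin.toFinset, hG ?_ hmem⟩
        rintro x ⟨j, hj', s, hs, hjs, rfl⟩
        by_cases hj : j ≤ n
        · simp only [hj, if_true]
          exact Or.inl ⟨⟨a j s, ha j hj s hs⟩, by simpa using ⟨j, hj, s, hs, rfl⟩, rfl⟩
        · simp only [hj, if_false]
          exact Or.inr ⟨s, hjs.resolve_left (by omega), rfl⟩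

/-! ### Set maps without free sets -/

/-- A set can be ranked injectively by ordinals so that proper initial segments are smaller than
the set itself. -/
lemma exists_rank {A : Type u} (B : Set A) :
    ∃ g : A → Ordinal.{u}, Set.InjOn g B ∧ ∀ x ∈ B, #↥{y | y ∈ B ∧ g y < g x} < #B := by
  classical
  obtain ⟨r, hr, hord⟩ := Cardinal.exists_ord_eq B
  refine ⟨fun x => if h : x ∈ B then Ordinal.typein r ⟨x, h⟩ else 0, ?_, ?_⟩
  · intro x hx y hy hxy
    simp only [hx, hy, dif_pos] at hxy
    exact congrArg Subtype.val (Ordinal.typein_injective r hxy)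
  · intro x hx
    have h := Cardinal.card_typein_lt (r := r) ⟨x, hx⟩ hord
    rw [Ordinal.card_typein] at h
    refine lt_of_le_of_lt ?_ h
    refine mk_le_of_injective (f := fun y => ⟨⟨y.1, y.2.1⟩, ?_⟩) ?_
    · have := y.2.2
      simp only [y.2.1, hx, dif_pos] at this
      exact (Ordinal.typein_lt_typein r).mp this
    · intro y z hyz
      exact Subtype.ext (by simpa using hyz)

open Classical in
/-- Sets of size less than `λ⁺ᵏ` carry a set map without free sets of size `k + 1`. -/
lemma exists_no_free_set {A : Type u} {lam : Cardinal.{u}} (hlam : ℵ₀ ≤ lam) (k : ℕ) :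
    ∀ B : Set A, #B < succN lam k → ∃ F : Finset A → Set A, (∀ S, #(F S) < lam) ∧
      ∀ S : Finset A, ↑S ⊆ B → S.card = k + 1 → ∃ x ∈ S, x ∈ F (S.erase x) := by
  induction k with
  | zero =>
    intro B hB
    refine ⟨fun _ => B, fun _ => hB, fun S hS hc => ?_⟩
    obtain ⟨x, rfl⟩ := Finset.card_eq_one.mp hc
    exact ⟨x, by simp, hS (by simp)⟩
  | succ k ih =>
    intro B hB
    rw [succN_succ, Order.lt_succ_iff] at hB
    obtain ⟨g, hg, hlt⟩ := exists_rank B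
    have h : ∀ a : A, ∃ F : Finset A → Set A, (∀ S, #(F S) < lam) ∧ (a ∈ B →
        ∀ S : Finset A, ↑S ⊆ {y | y ∈ B ∧ g y < g a} → S.card = k + 1 →
          ∃ x ∈ S, x ∈ F (S.erase x)) := by
      intro a
      by_cases ha : a ∈ B
      · obtain ⟨F, h1, h2⟩ := ih _ ((hlt a ha).trans_le hB)
        exact ⟨F, h1, fun _ => h2⟩
      · exact ⟨fun _ => ∅, fun _ => by simpa using aleph0_pos.trans_le hlam, fun h => absurd h ha⟩
    choose Fa hFa hfree using h
    refine ⟨fun S => ⋃ a : S, Fa a (S.erase a),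
      fun S => mk_iUnion_lt_of_finite hlam _ fun a => hFa _ _, fun S hS hc => ?_⟩
    obtain ⟨a, haS, hmax⟩ := S.exists_max_image g (Finset.card_pos.mp (by omega))
    obtain ⟨x, hx, hxF⟩ := hfree a (hS haS) (S.erase a) (by
        intro y hy
        have hy' := Finset.mem_erase.mp (Finset.mem_coe.mp hy)
        exact ⟨hS hy'.2, lt_of_le_of_ne (hmax y hy'.2)
          fun e => hy'.1 (hg (hS hy'.2) (hS haS) e)⟩)
      (by rw [Finset.card_erase_of_mem haS]; omega)
    have hx' := Finset.mem_erase.mp hx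
    refine ⟨x, hx'.2, Set.mem_iUnion.mpr
      ⟨⟨a, Finset.mem_erase.mpr ⟨hx'.1.symm, haS⟩⟩, ?_⟩⟩
    rwa [Finset.erase_right_comm]

/-! ### Products of trees -/

lemma exists_numbering (α : Type v) [PartialOrder α] [Finite α] :
    ∃ ρ : α → ℕ, StrictMono ρ ∧ Function.Injective ρ := by
  classical
  have : Finite (LinearExtension α) := ‹Finite α›
  have := Fintype.ofFinite (LinearExtension α)
  let e := Fintype.orderIsoFinOfCardEq (LinearExtension α) rfl
  have hinj : Function.Injective (toLinearExtension : α → LinearExtension α) := fun _ _ h => h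
  exact ⟨fun x => e.symm (toLinearExtension x), fun x y h => Fin.lt_def.mp <|
    e.symm.strictMono (toLinearExtension.monotone.strictMono_of_injective hinj h),
    fun x y h => hinj (e.symm.injective (Fin.ext h))⟩

/-- The positive half: the product is embedded through codes of tuples of free sequences. -/
lemma leadsto_prod (n : ℕ) (hn : 2 ≤ n)
    (T : Fin n → Type v) [∀ i, PartialOrder (T i)] [∀ i, Finite (T i)]
    (htree : ∀ i, ∀ a : T i, IsChain (· ≤ ·) (Set.Iic a))
    (κ : Cardinal.{u}) (hκ : ℵ₀ ≤ κ) : Leadsto (succN κ (n - 1)) κ (∀ i, T i) := by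
  classical
  intro A hA F hF
  have hAinf : ℵ₀ ≤ #A := hA ▸ hκ.trans (le_succN κ _)
  obtain ⟨e⟩ : Nonempty ((Fin n → A) ≃ A) := by
    rw [← Cardinal.eq]
    simpa using power_nat_eq hAinf (by omega : 1 ≤ n)
  choose ρ hρ hρinj using fun i => exists_numbering (T i)
  obtain ⟨m, hm⟩ : ∃ m, ∀ i x, ρ i x < m := by
    obtain ⟨M, hM⟩ := (Set.finite_range fun p : Σ i, T i => ρ p.1 p.2).bddAbove
    exact ⟨M + 1, fun i x => Nat.lt_succ_of_le (hM ⟨⟨i, x⟩, rfl⟩)⟩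
  -- `G U` collects `U` and all coordinates of elements of `F Y`, where `Y` is a set of codes of
  -- tuples over `U`.
  let C : Set A → Set A := fun U => e '' {v | ∀ i, v i ∈ U}
  let G : Set A → Set A := fun U =>
    U ∪ ⋃ Y : {Y : Set A // Y ⊆ C U}, ⋃ i, (fun c => e.symm c i) '' F Y
  have hCmono : Monotone C := fun U V h => Set.image_mono fun v hv i => h (hv i)
  have hGmono : Monotone G := by
    intro U V h
    refine Set.union_subset_union h (Set.iUnion_subset fun Y => ?_)
    exact Set.subset_iUnion (fun Y : {Y : Set A // Y ⊆ C V} =>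
      ⋃ i, (fun c => e.symm c i) '' F Y) ⟨Y.1, Y.2.trans (hCmono h)⟩
  have hGκ : ∀ U : Set A, U.Finite → #(G U) < κ := by
    intro U hU
    have hC : (C U).Finite := by
      refine Set.Finite.image _ ?_
      simpa [Set.pi] using Set.Finite.pi (fun _ : Fin n => hU)
    have : Finite {Y : Set A // Y ⊆ C U} := hC.finite_subsets.to_subtype
    refine (mk_union_le _ _).trans_lt
      (add_lt_of_lt hκ ((lt_aleph0_iff_set_finite.mpr hU).trans_le hκ) ?_)
    exact mk_iUnion_lt_of_finite hκ _ fun Y => mk_iUnion_lt_of_finite hκ _ fun i =>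
      mk_image_le.trans_lt (hF _)
  obtain ⟨a, -, ha⟩ := exists_free_sequences hκ m (n - 1) (Set.univ : Set A)
    (by rw [mk_univ, hA]) G hGmono hGκ
  -- The terms of each sequence are distinct because `U ⊆ G U`.
  have hlt : ∀ i : Fin n, ∀ s t, s < t → t < m → a i s ≠ a i t := by
    intro i s t hst htm h
    exact ha i (by omega) t htm (Or.inl ⟨i, by omega, s, hst.trans htm, Or.inr hst, h.symm⟩)
  have hinj : ∀ (i : Fin n) (x y : T i), a i (ρ i x) = a i (ρ i y) → x = y := by
    intro i x y h
    apply hρinj i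
    rcases lt_trichotomy (ρ i x) (ρ i y) with h' | h' | h'
    · exact absurd h (hlt i _ _ h' (hm i y))
    · exact h'
    · exact absurd h.symm (hlt i _ _ h' (hm i x))
  refine ⟨fun w => e fun i => a i (ρ i (w i)), ?_, ?_⟩
  · intro x y h
    funext i
    exact hinj i _ _ (congrFun (e.injective h) i)
  · rintro x y hxy c ⟨hc, w, hwy, rfl⟩
    refine ⟨w, ?_, rfl⟩
    by_contra hwx
    obtain ⟨i, hi⟩ : ∃ i, ¬ w i ≤ x i := by simpa [Pi.le_def] using hwx
    have hxw : x i < w i :=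
      lt_of_le_not_ge (((htree i (y i)).total (hwy i) (hxy i)).resolve_left hi) hi
    refine ha i (by omega) (ρ i (w i)) (hm i _) (Or.inr ?_)
    refine Set.mem_iUnion.mpr ⟨⟨_, ?_⟩, Set.mem_iUnion.mpr ⟨i, _, hc, by simp⟩⟩
    rintro _ ⟨u, hu, rfl⟩
    refine ⟨_, fun j => ⟨j, by omega, ρ j (u j), hm j _, ?_, rfl⟩, rfl⟩
    by_cases hj : j = i
    · subst hj
      exact Or.inr (hρ j ((hu j).trans_lt hxw))
    · exact Or.inl fun h => hj (Fin.ext h)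

/-- The negative half: the images of the `n` atoms of a copy of `2ⁿ` in the product contradict the
absence of free sets. -/
lemma not_leadsto_prod (n : ℕ) (hn : 2 ≤ n)
    (T : Fin n → Type v) [∀ i, PartialOrder (T i)] [∀ i, Finite (T i)]
    [∀ i, OrderBot (T i)] [∀ i, Nontrivial (T i)]
    (lam : Cardinal.{u}) (hlam : ℵ₀ ≤ lam) :
    ¬ Leadsto (succN lam (n - 2)) lam (∀ i, T i) := by
  classical
  intro H
  obtain ⟨A, hA⟩ : ∃ A : Type u, #A = succN lam (n - 2) := ⟨_, mk_out _⟩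
  obtain ⟨F, hF, hfree⟩ := exists_no_free_set (A := A) hlam (n - 2 + 1) Set.univ
    (by rw [mk_univ, hA, succN_succ]; exact Order.lt_succ _)
  -- `F` is made monotone by taking unions over finite subsets, and trivial on infinite sets.
  obtain ⟨f, hf, hfF⟩ := H A hA
    (fun X => if X.Finite then ⋃ Y : {Y : Finset A // ↑Y ⊆ X}, F Y else ∅) (by
      intro X
      split_ifs with hX
      · have : Finite {Y : Finset A // ↑Y ⊆ X} :=
          Finite.of_injective (β := {Y : Finset A // Y ∈ hX.toFinset.powerset})
            (fun Y => ⟨Y.1, by simpa using Y.2⟩)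
            (fun Y Z h => Subtype.ext (by simpa using h))
        exact mk_iUnion_lt_of_finite hlam _ fun Y => hF _
      · simpa using aleph0_pos.trans_le hlam)
  choose t ht using fun i => exists_ne (⊥ : T i)
  -- The atoms `q i` and coatoms `p i` of the copy of `2ⁿ` with top `t`.
  let q : Fin n → ∀ i, T i := fun i => Function.update ⊥ i (t i)
  let p : Fin n → ∀ i, T i := fun i => Function.update t i ⊥
  have hqt : ∀ i, q i ≤ t := fun i => update_le_iff.mpr ⟨le_rfl, fun _ _ => bot_le⟩
  have hpt : ∀ i, p i ≤ t := fun i => update_le_iff.mpr ⟨bot_le, fun _ _ => le_rfl⟩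
  have hqp : ∀ i j, j ≠ i → q j ≤ p i := by
    intro i j hij
    refine update_le_iff.mpr ⟨?_, fun _ _ => bot_le⟩
    simp [p, hij]
  have hqp' : ∀ i, ¬ q i ≤ p i := by
    intro i h
    have := h i
    simp only [q, p, Function.update_self, le_bot_iff] at this
    exact ht i this
  have hq : Function.Injective q := by
    intro i j hij
    by_contra hne
    exact hqp' j (hij ▸ hqp j i hne)
  obtain ⟨x, hx, hxF⟩ := hfree (Finset.univ.image (f ∘ q)) (Set.subset_univ _) (by
    rw [Finset.card_image_of_injective _ (hf.comp hq), Finset.card_univ, Fintype.card_fin]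
    omega)
  obtain ⟨i, -, rfl⟩ := Finset.mem_image.mp hx
  have hfin : (f '' Set.Iic (p i)).Finite := Set.toFinite _
  have hmem := hfF (p i) t (hpt i) (a := f (q i)) ⟨by
    rw [if_pos hfin]
    refine Set.mem_iUnion.mpr ⟨⟨_, ?_⟩, hxF⟩
    intro y hy
    obtain ⟨hne, hy⟩ := Finset.mem_erase.mp (Finset.mem_coe.mp hy)
    obtain ⟨j, -, rfl⟩ := Finset.mem_image.mp hy
    exact ⟨q j, hqp i j (by rintro rfl; exact hne rfl), rfl⟩, ⟨q i, hqt i, rfl⟩⟩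
  obtain ⟨w, hw, hwq⟩ := hmem
  exact hqp' i (hf hwq ▸ hw)

/-- If `P` is a product of `n ≥ 2` nontrivial finite trees, then `(κ^{+(n-1)},<κ)⤳P`
holds for every infinite cardinal `κ`, while `(λ^{+(n-2)},<λ)⤳P` fails for every
infinite cardinal `λ`: the Kuratowski index of `P` is exactly `n`. -/
theorem stmt11 (n : ℕ) (hn : 2 ≤ n)
    (T : Fin n → Type v) [∀ i, PartialOrder (T i)] [∀ i, Finite (T i)]
    [∀ i, OrderBot (T i)] [∀ i, Nontrivial (T i)]
    (htree : ∀ i, ∀ a : T i, IsChain (· ≤ ·) (Set.Iic a)) :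
    (∀ κ : Cardinal.{u}, ℵ₀ ≤ κ → Leadsto (succN κ (n - 1)) κ (∀ i, T i)) ∧
    (∀ lam : Cardinal.{u}, ℵ₀ ≤ lam → ¬ Leadsto (succN lam (n - 2)) lam (∀ i, T i)) := by
  exact ⟨leadsto_prod n hn T htree, not_leadsto_prod n hn T⟩
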